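/- (Strengthened Manipulation Deterrence) For any quorum Q > 0 there exists f* > Q (strictly greater than the quorum threshold) such that for every f with 0 < f < f*, C(f) > G(f, Q); that is, the critical faction size strictly exceeds the quorum itself. -/

import Mathlib

/-- Mobilisation cost `C(f) = c₁·f² + c₂·f`. -/
def mobCost (c₁ c₂ f : ℝ) : ℝ := c₁ * f ^ 2 + c₂ * f

/-- Manipulation gain `G(f, Q) = g_max·(1 − exp(−k·max(f − Q, 0)))`. -/
noncomputable def manipGain (gmax k f Q : ℝ) : ℝ := gmax * (1 - Real.exp (-k * max (f - Q) 0))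

/-- Strengthened Manipulation Deterrence: for any quorum `Q > 0` there exists
`f* > Q` (strictly greater than the quorum threshold) such that for every `f`
with `0 < f < f*`, `C(f) > G(f, Q)`. -/
theorem manipulation_deterrence_strong (c₁ c₂ gmax k Q : ℝ)
    (hc₁ : 0 < c₁) (hc₂ : 0 < c₂) (hg : 0 < gmax) (hk : 0 < k) (hQ : 0 < Q) :
    ∃ fstar : ℝ, Q < fstar ∧
      ∀ f : ℝ, 0 < f → f < fstar → mobCost c₁ c₂ f > manipGain gmax k f Q := by
  have hgk : 0 < gmax * k := mul_pos hg hk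
  refine ⟨Q + c₂ * Q / (gmax * k), by linarith [div_pos (mul_pos hc₂ hQ) hgk], ?_⟩
  intro f hf hlt
  unfold mobCost manipGain
  have h1 : 0 < c₁ * f ^ 2 := by positivity
  have h2 : 0 < c₂ * f := by positivity
  rcases le_total f Q with h | h
  · rw [max_eq_right (by linarith)]
    simp only [mul_zero, Real.exp_zero, sub_self]
    linarith
  · rw [max_eq_left (by linarith)]
    have h3 := Real.add_one_le_exp (-k * (f - Q))
    have h4 : gmax * (1 - Real.exp (-k * (f - Q))) ≤ gmax * (k * (f - Q)) :=
      mul_le_mul_of_nonneg_left (by linarith) hg.le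
    have h5 : (f - Q) * (gmax * k) < c₂ * Q := (lt_div_iff₀ hgk).1 (by linarith)
    have h6 : c₂ * Q ≤ c₂ * f := mul_le_mul_of_nonneg_left h hc₂.le
    nlinarith
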